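/- Assume Q_k = k + O(1) and Q_k > (k − 1/2)·θ/π for all k. Let P be a sequence of positive reals with φ_j(P,P) = Q_j for all j and ln P_k = α_θ·ln k + o(1). Let (X^{(n)})_{n≥0} be a sequence of sequences of positive reals such that ln X^{(0)}_k = α_θ·ln k + o(1) as k → ∞ and φ_j(X^{(n)}, X^{(n+1)}) = Q_j for all j ≥ 1 and n ≥ 0. Then sup_{k≥1} |ln X^{(n)}_k − ln P_k| → 0 as n → ∞. -/

import Mathlib

open Filter Asymptotics MeasureTheory
open scoped ENNReal Topology

/-- `Theta θ E' E` is the argument of the complex number `E' + E·e^{iθ}`;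
for `0 < θ < π` and `E', E > 0` it lies in `(0, θ)` and equals
`arctan (sin θ / (E'/E + cos θ))` with the branch taken in `(0, θ)`. -/
noncomputable def Theta (θ E' E : ℝ) : ℝ :=
  Complex.arg ((E' : ℂ) + (E : ℂ) * Complex.exp (θ * Complex.I))

/-- `phi θ X Y j = (1/π) · ∑_{k ≥ 1} Θ(X_k, Y_j) ∈ (0, ∞]`, where sequences are
indexed by `ℕ` and only the values at indices `k ≥ 1` are used. -/
noncomputable def phi (θ : ℝ) (X Y : ℕ → ℝ) (j : ℕ) : ℝ≥0∞ :=
  ENNReal.ofReal (1 / Real.pi) * ∑' k : ℕ, ENNReal.ofReal (Theta θ (X (k + 1)) (Y j))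

/-- `Pker θ E E' = E·E' / (E² + 2·cos θ·E·E' + E'²)`. -/
noncomputable def Pker (θ E E' : ℝ) : ℝ :=
  E * E' / (E ^ 2 + 2 * Real.cos θ * E * E' + E' ^ 2)

/-- The drift `D_α = (1/π) ∫_0^∞ Θ(s^α, 1) ds`. -/
noncomputable def Drift (θ α : ℝ) : ℝ :=
  (1 / Real.pi) * ∫ s in Set.Ioi (0 : ℝ), Theta θ (s ^ α) 1

/-- `S_ε = ∫_0^∞ s^{-ε} / (s^{α_θ} + 2 cos θ + s^{-α_θ}) ds` with `α_θ = 1 + θ/π`. -/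
noncomputable def Sfun (θ ε : ℝ) : ℝ :=
  ∫ s in Set.Ioi (0 : ℝ), s ^ (-ε) /
    (s ^ (1 + θ / Real.pi) + 2 * Real.cos θ + s ^ (-(1 + θ / Real.pi)))

/-!
In logarithmic coordinates `Theta` becomes a strictly decreasing function of a difference, so each
step of the iteration preserves order and commutes with adding constants. Hence the sup-distance
to the fixed point `p = log P` is nonincreasing, and a super- or subsolution that once bounds an
iterate bounds all later ones. The tails are controlled uniformly in `n` by two barriers close to
`p`: deleting the first `a` entries of `p` gives a supersolution, and delaying `p` by `a` indices,
with a steep arithmetic progression in front, gives a subsolution; for both, large `a` suffices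
because `Q` has density larger than `θ / π`. With the tails controlled, a positive limit of the
sup-distances would be attained at a pointwise limit point of the orbit, where strict monotonicity
makes the distance drop.
-/

theorem le_of_hasSum_le {ι : Type*} [Nonempty ι] {f : ℝ → ℝ} (hf : StrictAnti f) {y z : ι → ℝ}
    {b c s t : ℝ} (hyz : y ≤ z) (hst : s ≤ t) (hs : HasSum (fun k => f (y k - b)) s)
    (ht : HasSum (fun k => f (z k - c)) t) : b ≤ c := by
  by_contra! hcb
  obtain ⟨i⟩ := ‹Nonempty ι›
  have hlt : t < s :=
    hasSum_lt (fun k => hf.antitone (sub_le_sub (hyz k) hcb.le))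
      (hf (by linarith [hyz i] : y i - b < z i - c)) ht hs
  exact hlt.not_ge hst

theorem lt_of_hasSum_le {ι : Type*} {f : ℝ → ℝ} (hf : StrictAnti f) {y z : ι → ℝ}
    {b c s t : ℝ} (hyz : y < z) (hst : s ≤ t) (hs : HasSum (fun k => f (y k - b)) s)
    (ht : HasSum (fun k => f (z k - c)) t) : b < c := by
  by_contra! hcb
  obtain ⟨hle, i, hi⟩ := Pi.lt_def.1 hyz
  have hlt : t < s :=
    hasSum_lt (fun k => hf.antitone (sub_le_sub (hle k) hcb)) (hf (by linarith : y i - b < z i - c))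
      ht hs
  exact hlt.not_ge hst

/-- `IsStep f q y z` is one step `y ↦ z` of the iteration in logarithmic coordinates, with the
kernel replaced by an arbitrary profile `f`. For `f = logTheta θ`, `y = log X`, `z = log Y` and
`q = π Q` it expresses `φ(X, Y) = Q`; the fixed points are the `p` with `IsStep f q p p`. -/
def IsStep {ι : Type*} (f : ℝ → ℝ) (q y z : ι → ℝ) : Prop :=
  ∀ j, HasSum (fun k => f (y k - z j)) (q j)

/-- A supersolution of the fixed-point equation `IsStep f q z z`: for decreasing `f`, it stays an
upper bound of any iterate that it once bounds from above. -/
def IsSupersolution {ι : Type*} (f : ℝ → ℝ) (q z : ι → ℝ) : Prop :=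
  ∀ j, ∃ s, q j ≤ s ∧ HasSum (fun k => f (z k - z j)) s

/-- A subsolution of the fixed-point equation `IsStep f q z z`: for decreasing `f`, it stays a
lower bound of any iterate that it once bounds from below. -/
def IsSubsolution {ι : Type*} (f : ℝ → ℝ) (q z : ι → ℝ) : Prop :=
  ∀ j, ∃ s, s ≤ q j ∧ HasSum (fun k => f (z k - z j)) s

section Comparison

variable {ι : Type*} {f : ℝ → ℝ} {p q y y' z : ι → ℝ} {x : ℕ → ι → ℝ} {δ : ℝ}

theorem IsStep.isSupersolution (hp : IsStep f q p p) : IsSupersolution f q p :=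
  fun j => ⟨q j, le_rfl, hp j⟩

theorem IsStep.isSubsolution (hp : IsStep f q p p) : IsSubsolution f q p :=
  fun j => ⟨q j, le_rfl, hp j⟩

theorem IsSupersolution.le_add_of_isStep [Nonempty ι] (hz : IsSupersolution f q z)
    (hf : StrictAnti f) (hstep : IsStep f q y y') (hy : ∀ k, y k ≤ z k + δ) (j : ι) :
    y' j ≤ z j + δ := by
  obtain ⟨s, hqs, hs⟩ := hz j
  exact le_of_hasSum_le hf hy hqs (hstep j) (by simpa only [add_sub_add_right_eq_sub] using hs)

theorem IsSubsolution.le_add_of_isStep [Nonempty ι] (hz : IsSubsolution f q z)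
    (hf : StrictAnti f) (hstep : IsStep f q y y') (hy : ∀ k, z k ≤ y k + δ) (j : ι) :
    z j ≤ y' j + δ := by
  obtain ⟨s, hsq, hs⟩ := hz j
  refine sub_le_iff_le_add.1 (le_of_hasSum_le (y := fun k => z k - δ) hf
    (fun k => sub_le_iff_le_add.2 (hy k)) hsq ?_ (hstep j))
  simpa only [sub_sub_sub_cancel_right] using hs

theorem IsSupersolution.le_add_of_forall_isStep [Nonempty ι] (hz : IsSupersolution f q z)
    (hf : StrictAnti f) (hx : ∀ n, IsStep f q (x n) (x (n + 1))) (h0 : ∀ k, x 0 k ≤ z k + δ)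
    (n : ℕ) : ∀ k, x n k ≤ z k + δ := by
  induction n with
  | zero => exact h0
  | succ n ih => exact hz.le_add_of_isStep hf (hx n) ih

theorem IsSubsolution.le_add_of_forall_isStep [Nonempty ι] (hz : IsSubsolution f q z)
    (hf : StrictAnti f) (hx : ∀ n, IsStep f q (x n) (x (n + 1))) (h0 : ∀ k, z k ≤ x 0 k + δ)
    (n : ℕ) : ∀ k, z k ≤ x n k + δ := by
  induction n with
  | zero => exact h0
  | succ n ih => exact hz.le_add_of_isStep hf (hx n) ih

theorem IsStep.abs_sub_le [Nonempty ι] (hp : IsStep f q p p) (hf : StrictAnti f)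
    (hstep : IsStep f q y z) (hy : ∀ k, |y k - p k| ≤ δ) (j : ι) : |z j - p j| ≤ δ := by
  have hyk k := abs_sub_le_iff.1 (hy k)
  have hle := hp.isSupersolution.le_add_of_isStep hf hstep (δ := δ)
    (fun k => by linarith [(hyk k).1]) j
  have hge := hp.isSubsolution.le_add_of_isStep hf hstep (δ := δ)
    (fun k => by linarith [(hyk k).2]) j
  exact abs_sub_le_iff.2 ⟨by linarith, by linarith⟩

theorem IsStep.abs_sub_le_of_le [Nonempty ι] (hp : IsStep f q p p) (hf : StrictAnti f)
    (hx : ∀ n, IsStep f q (x n) (x (n + 1))) {m n : ℕ} (hmn : m ≤ n)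
    (hm : ∀ k, |x m k - p k| ≤ δ) : ∀ k, |x n k - p k| ≤ δ := by
  induction n, hmn using Nat.le_induction with
  | base => exact hm
  | succ n _ ih => exact hp.abs_sub_le hf (hx n) ih

theorem IsStep.abs_sub_lt (hp : IsStep f q p p) (hf : StrictAnti f) (hstep : IsStep f q y z)
    (hy : ∀ k, |y k - p k| ≤ δ) (hlt : ∃ i, |y i - p i| < δ) (j : ι) : |z j - p j| < δ := by
  obtain ⟨i, hi⟩ := hlt
  have hyi := abs_sub_lt_iff.1 hi
  have hyk k := abs_sub_le_iff.1 (hy k)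
  have hupper : y < fun k => p k + δ :=
    Pi.lt_def.2 ⟨fun k => by linarith [(hyk k).1], i, by linarith⟩
  have hlower : (fun k => p k - δ) < y :=
    Pi.lt_def.2 ⟨fun k => by linarith [(hyk k).2], i, by linarith⟩
  have hz_lt : z j < p j + δ := lt_of_hasSum_le hf hupper le_rfl (hstep j)
    (by simpa only [add_sub_add_right_eq_sub] using hp j)
  have hlt_z : p j - δ < z j := lt_of_hasSum_le hf hlower le_rfl
    (by simpa only [sub_sub_sub_cancel_right] using hp j) (hstep j)
  exact abs_sub_lt_iff.2 ⟨by linarith, by linarith⟩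

end Comparison

section Convergence

variable {ι : Type*} {f : ℝ → ℝ} {p q : ι → ℝ} {x : ℕ → ι → ℝ}

theorem IsStep.of_tendsto {α : Type*} {l : Filter α} [l.NeBot] (hf : Antitone f)
    (hfc : Continuous f) (hf0 : ∀ u, 0 ≤ f u) {lo : ι → ℝ}
    (hlo : ∀ c, Summable fun k => f (lo k - c)) {Y Z : α → ι → ℝ} {y z : ι → ℝ}
    (hloY : ∀ a, lo ≤ Y a) (hstep : ∀ a, IsStep f q (Y a) (Z a))
    (hY : ∀ k, Tendsto (fun a => Y a k) l (𝓝 (y k)))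
    (hZ : ∀ k, Tendsto (fun a => Z a k) l (𝓝 (z k))) : IsStep f q y z := by
  intro j
  have hloy k : lo k ≤ y k := ge_of_tendsto' (hY k) fun a => hloY a k
  have hsummable : Summable fun k => f (y k - z j) :=
    .of_nonneg_of_le (fun _ => hf0 _) (fun k => hf (sub_le_sub_right (hloy k) _)) (hlo (z j))
  have hlim : Tendsto (fun a => ∑' k, f (Y a k - Z a j)) l (𝓝 (∑' k, f (y k - z j))) := by
    refine tendsto_tsum_of_dominated_convergence (hlo (z j + 1))
      (fun k => (hfc.tendsto _).comp ((hY k).sub (hZ j))) ?_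
    filter_upwards [(hZ j).eventually_le_const (lt_add_one (z j))] with a ha k
    rw [Real.norm_of_nonneg (hf0 _)]
    exact hf (sub_le_sub (hloY a k) ha)
  have hconst : Tendsto (fun a => ∑' k, f (Y a k - Z a j)) l (𝓝 (q j)) := by
    simp only [(hstep _ j).tsum_eq, tendsto_const_nhds]
  exact tendsto_nhds_unique hlim hconst ▸ hsummable.hasSum

theorem exists_forall_tendsto_ultrafilter {α : Type*} (U : Ultrafilter α) {Y : α → ι → ℝ}
    {b : ι → ℝ} {d : ℝ} (hY : ∀ a k, |Y a k - b k| ≤ d) :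
    ∃ y : ι → ℝ, ∀ k, Tendsto (fun a => Y a k) U (𝓝 (y k)) := by
  refine ⟨fun k => (U.map fun a => Y a k).lim, fun k => ?_⟩
  obtain ⟨y, -, hy⟩ := (isCompact_closedBall (b k) d).ultrafilter_le_nhds
    (U.map fun a => Y a k) (le_principal_iff.2
      (Eventually.of_forall (f := (U : Filter α)) fun a => hY a k))
  exact le_nhds_lim ⟨y, hy⟩

theorem exists_forall_le_of_eventually_cofinite_le {u : ι → ℝ} {d : ℝ}
    (hu : ∀ᶠ k in cofinite, u k ≤ d) : ∃ c, ∀ k, u k ≤ c := by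
  obtain ⟨c, hc⟩ :=
    (isBoundedUnder_of_eventually_le hu).bddAbove_range_of_cofinite
  exact ⟨c, fun k => hc ⟨k, rfl⟩⟩

theorem exists_lt_exists_forall_abs_sub_le {α : Type*} {l : Filter α} [l.NeBot] {Y : α → ι → ℝ}
    {z : ι → ℝ} {r d : ℝ} (hrd : r < d) (hz : ∀ k, |z k - p k| < d)
    (hY : ∀ k, Tendsto (fun a => Y a k) l (𝓝 (z k)))
    (htail : ∀ᶠ k in cofinite, ∀ a, |Y a k - p k| ≤ r) :
    ∃ c < d, ∃ a, ∀ k, |Y a k - p k| ≤ c := by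
  let T : Finset ι := (eventually_cofinite.1 htail).toFinset
  have hnear : ∀ᶠ c in 𝓝 d, r < c ∧ ∀ k ∈ T, |z k - p k| < c :=
    (eventually_gt_nhds hrd).and
      ((eventually_all_finset T).2 fun k _ => eventually_gt_nhds (hz k))
  obtain ⟨c, ⟨hrc, hzc⟩, hcd⟩ :=
    ((hnear.filter_mono nhdsWithin_le_nhds).and (eventually_mem_nhdsWithin (s := Set.Iio d))).exists
  obtain ⟨a, ha⟩ : ∃ a, ∀ k ∈ T, |Y a k - p k| < c :=
    ((eventually_all_finset T).2 fun k hk =>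
      ((hY k).sub_const (p k)).abs.eventually_lt_const (hzc k hk)).exists
  refine ⟨c, hcd, a, fun k => ?_⟩
  by_cases hk : k ∈ T
  · exact (ha k hk).le
  · have hk' : ∀ b, |Y b k - p k| ≤ r := by
      simpa only [T, Set.Finite.mem_toFinset, Set.mem_ofPred_eq, not_not] using hk
    exact (hk' a).trans hrc.le

/- LaSalle: the sup-distance to `p` is nonincreasing along the orbit, and at a pointwise limit point
of the orbit it would be preserved by the step, which the strict comparison forbids. -/
theorem IsStep.exists_lt_forall_abs_sub_le [Infinite ι] (hf : StrictAnti f) (hfc : Continuous f)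
    (hf0 : ∀ u, 0 ≤ f u) (hp : IsStep f q p p) (hsum : ∀ c, Summable fun k => f (p k - c))
    (hx : ∀ n, IsStep f q (x n) (x (n + 1)))
    (htail : ∀ δ > 0, ∀ᶠ k in cofinite, ∀ n, |x n k - p k| ≤ δ) {d : ℝ} (hd : 0 < d)
    (hbound : ∀ c > d, ∃ n, ∀ k, |x n k - p k| ≤ c) :
    ∃ c < d, ∃ n, ∀ k, |x n k - p k| ≤ c := by
  obtain ⟨d₀, hd₀⟩ := exists_forall_le_of_eventually_cofinite_le
    ((htail 1 one_pos).mono fun k hk => hk 0)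
  have hbdd n := hp.abs_sub_le_of_le hf hx (Nat.zero_le n) hd₀
  let U : Ultrafilter ℕ := .of atTop
  obtain ⟨y, hy⟩ := exists_forall_tendsto_ultrafilter U hbdd
  obtain ⟨z, hz⟩ := exists_forall_tendsto_ultrafilter U fun n => hbdd (n + 1)
  have hyz : IsStep f q y z :=
    .of_tendsto (lo := fun k => p k - d₀) hf.antitone hfc hf0
      (fun c => by simpa only [sub_sub] using hsum (d₀ + c))
      (fun n k => by linarith [neg_le_of_abs_le (hbdd n k)]) hx hy hz
  have hyd k : |y k - p k| ≤ d := by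
    refine le_of_forall_gt_imp_ge_of_dense fun c hc => ?_
    obtain ⟨N, hN⟩ := hbound c hc
    refine le_of_tendsto ((hy k).sub_const (p k)).abs (Ultrafilter.of_le atTop ?_)
    exact (eventually_ge_atTop N).mono fun n hn => hp.abs_sub_le_of_le hf hx hn hN k
  obtain ⟨i, hi⟩ := (htail (d / 2) (half_pos hd)).exists
  have hyi : |y i - p i| < d :=
    (le_of_tendsto' ((hy i).sub_const (p i)).abs hi).trans_lt (half_lt_self hd)
  obtain ⟨c, hcd, n, hn⟩ := exists_lt_exists_forall_abs_sub_le (half_lt_self hd)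
    (hp.abs_sub_lt hf hyz hyd ⟨i, hyi⟩) hz
    ((htail (d / 2) (half_pos hd)).mono fun k hk n => hk (n + 1))
  exact ⟨c, hcd, n + 1, hn⟩

theorem IsStep.tendstoUniformly_of_cofinite [Infinite ι] (hf : StrictAnti f) (hfc : Continuous f)
    (hf0 : ∀ u, 0 ≤ f u) (hp : IsStep f q p p) (hsum : ∀ c, Summable fun k => f (p k - c))
    (hx : ∀ n, IsStep f q (x n) (x (n + 1)))
    (htail : ∀ δ > 0, ∀ᶠ k in cofinite, ∀ n, |x n k - p k| ≤ δ) :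
    TendstoUniformly x p atTop := by
  let S : Set ℝ := {c | ∃ n, ∀ k, |x n k - p k| ≤ c}
  have hS_nonempty : S.Nonempty :=
    (exists_forall_le_of_eventually_cofinite_le
      ((htail 1 one_pos).mono fun k hk => hk 0)).imp fun _ hc => ⟨0, hc⟩
  have hS_bdd : BddBelow S :=
    ⟨0, fun c ⟨n, hn⟩ => (abs_nonneg _).trans (hn (Classical.arbitrary ι))⟩
  have hS_le : sInf S ≤ 0 := by
    by_contra! hpos
    obtain ⟨c, hc, hcS⟩ := IsStep.exists_lt_forall_abs_sub_le hf hfc hf0 hp hsum hx htail hpos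
      fun c hc => by
        obtain ⟨b, ⟨n, hn⟩, hbc⟩ := exists_lt_of_csInf_lt hS_nonempty hc
        exact ⟨n, fun k => (hn k).trans hbc.le⟩
    exact hc.not_ge (csInf_le hS_bdd hcS)
  rw [Metric.tendstoUniformly_iff]
  intro ε hε
  obtain ⟨c, ⟨N, hN⟩, hcε⟩ := exists_lt_of_csInf_lt hS_nonempty (hS_le.trans_lt hε)
  filter_upwards [eventually_ge_atTop N] with n hn k
  rw [dist_comm, Real.dist_eq]
  exact (hp.abs_sub_le_of_le hf hx hn hN k).trans_lt hcε

end Convergence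

section Barriers

variable {f : ℝ → ℝ} {p q : ℕ → ℝ} {θ : ℝ} {a : ℕ}

theorem tendsto_atTop_of_summable (hf : StrictAnti f) (hf0 : ∀ u, 0 < f u) {c : ℝ}
    (h : Summable fun k => f (p k - c)) : Tendsto p atTop atTop := by
  refine tendsto_atTop.2 fun b => ?_
  filter_upwards [h.tendsto_atTop_zero.eventually_lt_const (hf0 (b - c))] with k hk
  exact (sub_le_sub_iff_right c).1 (hf.lt_iff_gt.1 hk).le

theorem IsStep.tendsto_atTop (hp : IsStep f q p p) (hf : StrictAnti f) (hf0 : ∀ u, 0 < f u) :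
    Tendsto p atTop atTop :=
  tendsto_atTop_of_summable hf hf0 (hp 0).summable

theorem IsStep.summable_sub_const (hp : IsStep f q p p) (hf : StrictAnti f) (hf0 : ∀ u, 0 < f u)
    (c : ℝ) : Summable fun k => f (p k - c) := by
  obtain ⟨j, hj⟩ := ((hp.tendsto_atTop hf hf0).eventually_ge_atTop c).exists
  exact .of_nonneg_of_le (fun _ => (hf0 _).le) (fun k => hf.antitone (sub_le_sub_left hj _))
    (hp j).summable

theorem sum_range_le_mul (hfθ : ∀ u, f u ≤ θ) (n : ℕ) (u : ℕ → ℝ) :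
    ∑ i ∈ Finset.range n, f (u i) ≤ n * θ := by
  simpa only [Finset.card_range, nsmul_eq_mul] using
    (Finset.range n).sum_le_card_nsmul (fun i => f (u i)) θ fun i _ => hfθ (u i)

theorem IsStep.isSupersolution_shift (hp : IsStep f q p p) (hfθ : ∀ u, f u ≤ θ)
    (hq : ∀ j, q j + a * θ ≤ q (j + a)) : IsSupersolution f q fun k => p (k + a) := by
  refine fun j => ⟨q (j + a) - ∑ i ∈ Finset.range a, f (p i - p (j + a)), ?_,
    (hasSum_nat_add_iff' a).2 (hp (j + a))⟩
  linarith [hq j, sum_range_le_mul hfθ a fun i => p i - p (j + a)]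

/-- The sequence `p` delayed by `a` indices, preceded by an arithmetic progression of slope `D`
rising to `0`. For `p` a fixed point, it is a subsolution as soon as `D` is large. -/
noncomputable def lowerBarrier (p : ℕ → ℝ) (a : ℕ) (D : ℝ) (k : ℕ) : ℝ :=
  if k < a then D * ((k : ℝ) - a) else p (k - a)

theorem lowerBarrier_of_lt {k : ℕ} (D : ℝ) (hk : k < a) :
    lowerBarrier p a D k = D * ((k : ℝ) - a) :=
  if_pos hk

theorem lowerBarrier_of_le {k : ℕ} (D : ℝ) (hk : a ≤ k) : lowerBarrier p a D k = p (k - a) :=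
  if_neg hk.not_gt

theorem lowerBarrier_add (D : ℝ) (k : ℕ) : lowerBarrier p a D (k + a) = p k := by
  rw [lowerBarrier_of_le D (Nat.le_add_left a k), Nat.add_sub_cancel]

theorem hasSum_lowerBarrier {c s : ℝ} (h : HasSum (fun k => f (p k - c)) s) (D : ℝ) :
    HasSum (fun k => f (lowerBarrier p a D k - c))
      (s + ∑ i ∈ Finset.range a, f (lowerBarrier p a D i - c)) := by
  rw [← hasSum_nat_add_iff a]
  simpa only [lowerBarrier_add] using h

theorem tendsto_lowerBarrier_sub_atTop {j k : ℕ} (hja : j < a) (hjk : j < k) :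
    Tendsto (fun D => lowerBarrier p a D k - lowerBarrier p a D j) atTop atTop := by
  have hja' : (0 : ℝ) < a - j := sub_pos.2 (Nat.cast_lt.2 hja)
  have hjk' : (0 : ℝ) < k - j := sub_pos.2 (Nat.cast_lt.2 hjk)
  rcases lt_or_ge k a with hka | hak
  · refine (tendsto_id.atTop_mul_const hjk').congr fun D => ?_
    rw [lowerBarrier_of_lt D hka, lowerBarrier_of_lt D hja, id]
    ring
  · refine (tendsto_atTop_add_const_left _ (p (k - a)) (tendsto_id.atTop_mul_const hja')).congr
      fun D => ?_
    rw [lowerBarrier_of_le D hak, lowerBarrier_of_lt D hja, id]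
    ring

theorem lowerBarrier_zero_le_sub {j k : ℕ} (hja : j < a) (hjk : j < k) {D : ℝ} (hD : 0 ≤ D) :
    lowerBarrier p a 0 k ≤ lowerBarrier p a D k - lowerBarrier p a D j := by
  have hja' : 0 ≤ D * ((a : ℝ) - j) := mul_nonneg hD (sub_nonneg.2 (Nat.cast_le.2 hja.le))
  have hjk' : 0 ≤ D * ((k : ℝ) - j) := mul_nonneg hD (sub_nonneg.2 (Nat.cast_le.2 hjk.le))
  rw [lowerBarrier_of_lt D hja]
  rcases lt_or_ge k a with hka | hak
  · rw [lowerBarrier_of_lt 0 hka, lowerBarrier_of_lt D hka]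
    linarith
  · rw [lowerBarrier_of_le 0 hak, lowerBarrier_of_le D hak]
    linarith

theorem tendsto_tsum_lowerBarrier_zero (hf : Antitone f) (hf0 : ∀ u, 0 ≤ f u)
    (hf_top : Tendsto f atTop (𝓝 0)) (hsum : Summable fun k => f (p k)) {j : ℕ} (hja : j < a) :
    Tendsto (fun D => ∑' k, f (lowerBarrier p a D (k + (j + 1)) - lowerBarrier p a D j)) atTop
      (𝓝 0) := by
  have hjk k : j < k + (j + 1) := by lia
  have hbound : Summable fun k => f (lowerBarrier p a 0 (k + (j + 1))) := by
    have h := (hasSum_lowerBarrier (a := a) (c := 0)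
      (by simpa only [sub_zero] using hsum.hasSum) 0).summable
    simpa only [sub_zero] using (summable_nat_add_iff (j + 1)).2 h
  have hlim := tendsto_tsum_of_dominated_convergence hbound
    (fun k => hf_top.comp (tendsto_lowerBarrier_sub_atTop (p := p) hja (hjk k))) <| by
      filter_upwards [eventually_ge_atTop 0] with D hD k
      rw [Function.comp_apply, Real.norm_of_nonneg (hf0 _)]
      exact hf (lowerBarrier_zero_le_sub hja (hjk k) hD)
  simpa only [Function.comp_apply, tsum_zero] using hlim

theorem IsStep.eventually_isSubsolution_lowerBarrier (hp : IsStep f q p p) (hf : StrictAnti f)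
    (hf0 : ∀ u, 0 < f u) (hfθ : ∀ u, f u ≤ θ) (hf_top : Tendsto f atTop (𝓝 0))
    (hq0 : ∀ j : ℕ, j * θ + f 0 < q j) (hq : ∀ j, q j + a * θ ≤ q (j + a)) :
    ∀ᶠ D in atTop, IsSubsolution f q (lowerBarrier p a D) := by
  have hsum := hp.summable_sub_const hf hf0
  have hlow : ∀ᶠ D in atTop, ∀ j ∈ Finset.range a,
      ∑' k, f (lowerBarrier p a D (k + (j + 1)) - lowerBarrier p a D j) < q j - (j * θ + f 0) :=
    (eventually_all_finset _).2 fun j hj =>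
      (tendsto_tsum_lowerBarrier_zero hf.antitone (fun u => (hf0 u).le) hf_top
        (by simpa only [sub_zero] using hsum 0) (Finset.mem_range.1 hj)).eventually_lt_const
        (sub_pos.2 (hq0 j))
  filter_upwards [hlow] with D hD j
  rcases lt_or_ge j a with hja | haj
  · have hs := (hasSum_lowerBarrier (a := a) (hsum (lowerBarrier p a D j)).hasSum D).summable
    refine ⟨_, ?_, hs.hasSum⟩
    rw [← hs.sum_add_tsum_nat_add (j + 1), Finset.sum_range_succ, sub_self]
    linarith [hD j (Finset.mem_range.2 hja),
      sum_range_le_mul hfθ j fun i => lowerBarrier p a D i - lowerBarrier p a D j]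
  · obtain ⟨i, rfl⟩ := Nat.exists_eq_add_of_le' haj
    refine ⟨_, ?_, hasSum_lowerBarrier (by simpa only [lowerBarrier_add] using hp i) D⟩
    linarith [hq i,
      sum_range_le_mul hfθ a fun k => lowerBarrier p a D k - lowerBarrier p a D (i + a)]

theorem eventually_lowerBarrier_le {w : ℕ → ℝ} (h : ∀ k, p k ≤ w (k + a)) :
    ∀ᶠ D in atTop, ∀ k, lowerBarrier p a D k ≤ w k := by
  have hlow : ∀ᶠ D : ℝ in atTop, ∀ k ∈ Finset.range a, D * ((k : ℝ) - a) ≤ w k := by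
    refine (eventually_all_finset _).2 fun k hk => ?_
    have hka : (k : ℝ) - a < 0 := sub_neg.2 (Nat.cast_lt.2 (Finset.mem_range.1 hk))
    exact (tendsto_id.atTop_mul_const_of_neg hka).eventually_le_atBot (w k)
  filter_upwards [hlow] with D hD k
  rcases lt_or_ge k a with hka | hak
  · rw [lowerBarrier_of_lt D hka]
    exact hD k (Finset.mem_range.2 hka)
  · obtain ⟨i, rfl⟩ := Nat.exists_eq_add_of_le' hak
    rw [lowerBarrier_add]
    exact h i

end Barriers

section SlowlyVarying

variable {g u v : ℕ → ℝ}

theorem eventually_forall_le_shift_add (hg : Monotone g) (hv : Tendsto v atTop atTop)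
    (hug : Tendsto (fun k => u k - g k) atTop (𝓝 0))
    (hvg : Tendsto (fun k => v k - g k) atTop (𝓝 0)) {δ : ℝ} (hδ : 0 < δ) :
    ∀ᶠ a in atTop, ∀ k, u k ≤ v (k + a) + δ := by
  obtain ⟨K, hK⟩ := eventually_atTop.1
    ((hug.eventually_lt_const (half_pos hδ)).and
      (hvg.eventually_const_lt (neg_lt_zero.2 (half_pos hδ))))
  have hlow : ∀ᶠ a in atTop, ∀ k ∈ Finset.range K, u k ≤ v (k + a) :=
    (eventually_all_finset _).2 fun k _ =>
      (hv.comp (tendsto_add_atTop_nat k)).eventually_ge_atTop (u k) |>.mono fun a ha => by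
        rwa [Function.comp_apply, add_comm] at ha
  filter_upwards [hlow] with a ha k
  rcases lt_or_ge k K with hk | hk
  · linarith [ha k (Finset.mem_range.2 hk)]
  · linarith [(hK k hk).1, (hK (k + a) (by lia)).2, hg (Nat.le_add_right k a)]

theorem tendsto_shift_sub_zero (h : Tendsto (fun k => g (k + 1) - g k) atTop (𝓝 0)) (a : ℕ) :
    Tendsto (fun k => g (k + a) - g k) atTop (𝓝 0) := by
  induction a with
  | zero => simp only [add_zero, sub_self, tendsto_const_nhds]
  | succ a ih =>
    have hstep := (h.comp (tendsto_add_atTop_nat a)).add ih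
    rw [add_zero] at hstep
    refine hstep.congr fun k => ?_
    rw [Function.comp_apply, sub_add_sub_cancel, add_assoc]

theorem tendsto_succ_sub_of_tendsto_sub (h : Tendsto (fun k => g (k + 1) - g k) atTop (𝓝 0))
    (hug : Tendsto (fun k => u k - g k) atTop (𝓝 0)) :
    Tendsto (fun k => u (k + 1) - u k) atTop (𝓝 0) := by
  have hsum := ((hug.comp (tendsto_add_atTop_nat 1)).sub hug).add h
  rw [sub_zero, add_zero] at hsum
  refine hsum.congr fun k => ?_
  rw [Function.comp_apply]
  ring

end SlowlyVarying

section Orbits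

variable {f : ℝ → ℝ} {p q g : ℕ → ℝ} {x : ℕ → ℕ → ℝ} {θ : ℝ}

theorem IsStep.eventually_forall_orbit_le_add (hp : IsStep f q p p) (hf : StrictAnti f)
    (hf0 : ∀ u, 0 < f u) (hfθ : ∀ u, f u ≤ θ)
    (hq : ∀ᶠ a : ℕ in atTop, ∀ j, q j + a * θ ≤ q (j + a))
    (hx : ∀ n, IsStep f q (x n) (x (n + 1))) (hg : Monotone g)
    (hg_succ : Tendsto (fun k => g (k + 1) - g k) atTop (𝓝 0))
    (hpg : Tendsto (fun k => p k - g k) atTop (𝓝 0))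
    (hxg : Tendsto (fun k => x 0 k - g k) atTop (𝓝 0)) {δ : ℝ} (hδ : 0 < δ) :
    ∀ᶠ k in atTop, ∀ n, x n k ≤ p k + δ := by
  obtain ⟨a, hqa, h0⟩ := (hq.and (eventually_forall_le_shift_add hg (hp.tendsto_atTop hf hf0)
    hxg hpg (half_pos hδ))).exists
  have hupper := (hp.isSupersolution_shift hfθ hqa).le_add_of_forall_isStep hf hx h0
  have hshift := tendsto_shift_sub_zero (tendsto_succ_sub_of_tendsto_sub hg_succ hpg) a
  filter_upwards [hshift.eventually_lt_const (half_pos hδ)] with k hk n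
  linarith [hupper n k]

theorem IsStep.eventually_forall_le_orbit_add (hp : IsStep f q p p) (hf : StrictAnti f)
    (hf0 : ∀ u, 0 < f u) (hfθ : ∀ u, f u ≤ θ) (hf_top : Tendsto f atTop (𝓝 0))
    (hq0 : ∀ j : ℕ, j * θ + f 0 < q j)
    (hq : ∀ᶠ a : ℕ in atTop, ∀ j, q j + a * θ ≤ q (j + a))
    (hx : ∀ n, IsStep f q (x n) (x (n + 1))) (hg : Monotone g)
    (hg_succ : Tendsto (fun k => g (k + 1) - g k) atTop (𝓝 0))
    (hpg : Tendsto (fun k => p k - g k) atTop (𝓝 0))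
    (hxg : Tendsto (fun k => x 0 k - g k) atTop (𝓝 0)) {δ : ℝ} (hδ : 0 < δ) :
    ∀ᶠ k in atTop, ∀ n, p k ≤ x n k + δ := by
  have hx0 : Tendsto (x 0) atTop atTop :=
    ((hxg.sub hpg).add_atTop (hp.tendsto_atTop hf hf0)).congr fun k => by ring
  obtain ⟨a, hqa, ha⟩ :=
    (hq.and (eventually_forall_le_shift_add hg hx0 hpg hxg (half_pos hδ))).exists
  obtain ⟨D, hD, h0⟩ := ((hp.eventually_isSubsolution_lowerBarrier hf hf0 hfθ hf_top hq0 hqa).and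
    (eventually_lowerBarrier_le (w := fun k => x 0 k + δ / 2) ha)).exists
  have hlower := hD.le_add_of_forall_isStep hf hx h0
  have hshift := tendsto_shift_sub_zero (tendsto_succ_sub_of_tendsto_sub hg_succ hpg) a
  have hnear : ∀ᶠ k in atTop, p (k - a + a) - p (k - a) < δ / 2 :=
    (tendsto_sub_atTop_nat a).eventually (hshift.eventually_lt_const (half_pos hδ))
  filter_upwards [hnear, eventually_ge_atTop a] with k hk hak n
  have hlow := hlower n k
  rw [lowerBarrier_of_le D hak] at hlow
  rw [Nat.sub_add_cancel hak] at hk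
  linarith

theorem IsStep.tendstoUniformly (hp : IsStep f q p p) (hf : StrictAnti f) (hfc : Continuous f)
    (hf0 : ∀ u, 0 < f u) (hfθ : ∀ u, f u ≤ θ) (hf_top : Tendsto f atTop (𝓝 0))
    (hq0 : ∀ j : ℕ, j * θ + f 0 < q j)
    (hq : ∀ᶠ a : ℕ in atTop, ∀ j, q j + a * θ ≤ q (j + a))
    (hx : ∀ n, IsStep f q (x n) (x (n + 1))) (hg : Monotone g)
    (hg_succ : Tendsto (fun k => g (k + 1) - g k) atTop (𝓝 0))
    (hpg : Tendsto (fun k => p k - g k) atTop (𝓝 0))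
    (hxg : Tendsto (fun k => x 0 k - g k) atTop (𝓝 0)) :
    TendstoUniformly x p atTop := by
  refine IsStep.tendstoUniformly_of_cofinite hf hfc (fun u => (hf0 u).le) hp
    (hp.summable_sub_const hf hf0) hx fun δ hδ => ?_
  rw [Nat.cofinite_eq_atTop]
  filter_upwards [hp.eventually_forall_orbit_le_add hf hf0 hfθ hq hx hg hg_succ hpg hxg hδ,
    hp.eventually_forall_le_orbit_add hf hf0 hfθ hf_top hq0 hq hx hg hg_succ hpg hxg hδ]
    with k hle hge n
  exact abs_sub_le_iff.2 ⟨by linarith [hle n], by linarith [hge n]⟩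

end Orbits

section Kernel

variable {θ : ℝ}

theorem pi_div_two_sub_arctan_cos_div_sin {c : ℝ} (hc : 0 < c) (hcπ : c < Real.pi) :
    Real.pi / 2 - Real.arctan (Real.cos c / Real.sin c) = c := by
  rw [← inv_div (Real.sin c), ← Real.tan_eq_sin_div_cos, ← Real.tan_pi_div_two_sub,
    Real.arctan_tan (by linarith) (by linarith), sub_sub_cancel]

theorem arg_eq_pi_div_two_sub_arctan {z : ℂ} (hz : 0 < z.im) :
    z.arg = Real.pi / 2 - Real.arctan (z.re / z.im) := by
  have hz0 : z ≠ 0 := fun h => hz.ne' (by rw [h, Complex.zero_im])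
  have harg_pos : 0 < z.arg := (Complex.arg_nonneg_iff.2 hz.le).lt_of_ne'
    fun h => hz.ne' (Complex.arg_eq_zero_iff.1 h).2
  have harg_lt : z.arg < Real.pi := Complex.arg_lt_pi_iff.2 (.inr hz.ne')
  rw [← pi_div_two_sub_arctan_cos_div_sin harg_pos harg_lt, Complex.cos_arg hz0, Complex.sin_arg,
    div_div_div_cancel_right₀ (norm_ne_zero_iff.2 hz0)]

/-- The kernel `Theta` in logarithmic coordinates: `Theta θ x y = logTheta θ (log x - log y)`. -/
noncomputable def logTheta (θ u : ℝ) : ℝ :=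
  Real.pi / 2 - Real.arctan ((Real.exp u + Real.cos θ) / Real.sin θ)

theorem Theta_eq_logTheta (hθ : 0 < θ) (hθπ : θ < Real.pi) {x y : ℝ} (hx : 0 < x) (hy : 0 < y) :
    Theta θ x y = logTheta θ (Real.log x - Real.log y) := by
  have hsin := Real.sin_pos_of_pos_of_lt_pi hθ hθπ
  have hre : ((x : ℂ) + y * Complex.exp (θ * Complex.I)).re = x + y * Real.cos θ := by
    simp [Complex.exp_ofReal_mul_I_re]
  have him : ((x : ℂ) + y * Complex.exp (θ * Complex.I)).im = y * Real.sin θ := by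
    simp [Complex.exp_ofReal_mul_I_im]
  rw [Theta, arg_eq_pi_div_two_sub_arctan (him ▸ mul_pos hy hsin), hre, him, logTheta,
    Real.exp_sub, Real.exp_log hx, Real.exp_log hy]
  congr 2
  field_simp

theorem logTheta_strictAnti (hθ : 0 < θ) (hθπ : θ < Real.pi) : StrictAnti (logTheta θ) := by
  have hsin := Real.sin_pos_of_pos_of_lt_pi hθ hθπ
  intro u v huv
  refine sub_lt_sub_left (Real.arctan_strictMono ?_) _
  gcongr

theorem continuous_logTheta : Continuous (logTheta θ) := by
  unfold logTheta
  fun_prop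

theorem logTheta_pos (u : ℝ) : 0 < logTheta θ u :=
  sub_pos.2 (Real.arctan_lt_pi_div_two _)

theorem logTheta_lt (hθ : 0 < θ) (hθπ : θ < Real.pi) (u : ℝ) : logTheta θ u < θ := by
  have hsin := Real.sin_pos_of_pos_of_lt_pi hθ hθπ
  nth_rw 2 [← pi_div_two_sub_arctan_cos_div_sin hθ hθπ]
  refine sub_lt_sub_left (Real.arctan_strictMono ?_) _
  gcongr
  exact lt_add_of_pos_left _ (Real.exp_pos u)

theorem tendsto_logTheta_atTop (hθ : 0 < θ) (hθπ : θ < Real.pi) :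
    Tendsto (logTheta θ) atTop (𝓝 0) := by
  have harctan := (tendsto_nhds_of_tendsto_nhdsWithin Real.tendsto_arctan_atTop).comp
    ((tendsto_atTop_add_const_right _ (Real.cos θ) Real.tendsto_exp_atTop).atTop_div_const
      (Real.sin_pos_of_pos_of_lt_pi hθ hθπ))
  have h := harctan.const_sub (Real.pi / 2)
  rw [sub_self] at h
  exact h

theorem logTheta_zero (hθ : 0 < θ) (hθπ : θ < Real.pi) : logTheta θ 0 = θ / 2 := by
  have hsin : 0 < Real.sin (θ / 2) := Real.sin_pos_of_pos_of_lt_pi (by linarith) (by linarith)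
  have hcos : 0 < Real.cos (θ / 2) := Real.cos_pos_of_mem_Ioo ⟨by linarith, by linarith⟩
  have hcot : (1 + Real.cos θ) / Real.sin θ = Real.cos (θ / 2) / Real.sin (θ / 2) := by
    rw [← mul_div_cancel₀ θ (two_ne_zero' ℝ), Real.cos_two_mul, Real.sin_two_mul,
      mul_div_cancel₀ θ (two_ne_zero' ℝ)]
    field_simp
    ring
  rw [logTheta, Real.exp_zero, hcot, pi_div_two_sub_arctan_cos_div_sin (by linarith) (by linarith)]

theorem hasSum_logTheta_of_phi_eq (hθ : 0 < θ) (hθπ : θ < Real.pi) {X Y : ℕ → ℝ} {j : ℕ} {q : ℝ}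
    (hX : ∀ k, 1 ≤ k → 0 < X k) (hY : 0 < Y j) (hq : 0 ≤ q)
    (h : phi θ X Y j = ENNReal.ofReal q) :
    HasSum (fun k => logTheta θ (Real.log (X (k + 1)) - Real.log (Y j))) (Real.pi * q) := by
  have hnonneg k : 0 ≤ logTheta θ (Real.log (X (k + 1)) - Real.log (Y j)) := (logTheta_pos _).le
  simp only [phi, Theta_eq_logTheta hθ hθπ (hX _ (Nat.le_add_left 1 _)) hY] at h
  have hne_top : ∑' k, ENNReal.ofReal (logTheta θ (Real.log (X (k + 1)) - Real.log (Y j))) ≠ ⊤ := by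
    intro htop
    rw [htop, ENNReal.mul_top (by simp [Real.pi_pos])] at h
    exact ENNReal.ofReal_ne_top h.symm
  have hsummable : Summable fun k => logTheta θ (Real.log (X (k + 1)) - Real.log (Y j)) := by
    simpa only [ENNReal.toReal_ofReal (hnonneg _)] using ENNReal.summable_toReal hne_top
  rw [← ENNReal.ofReal_tsum_of_nonneg hnonneg hsummable, ← ENNReal.ofReal_mul (by positivity),
    ENNReal.ofReal_eq_ofReal_iff (mul_nonneg (by positivity) (tsum_nonneg hnonneg)) hq] at h
  rw [← h, one_div, mul_inv_cancel_left₀ Real.pi_ne_zero]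
  exact hsummable.hasSum

theorem isStep_log_of_phi_eq (hθ : 0 < θ) (hθπ : θ < Real.pi) {X Y Q : ℕ → ℝ}
    (hX : ∀ k, 1 ≤ k → 0 < X k) (hY : ∀ k, 1 ≤ k → 0 < Y k) (hQ : ∀ k, 1 ≤ k → 0 ≤ Q k)
    (h : ∀ j, 1 ≤ j → phi θ X Y j = ENNReal.ofReal (Q j)) :
    IsStep (logTheta θ) (fun j => Real.pi * Q (j + 1)) (fun k => Real.log (X (k + 1)))
      (fun k => Real.log (Y (k + 1))) := fun j =>
  have hj := Nat.le_add_left 1 j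
  hasSum_logTheta_of_phi_eq hθ hθπ hX (hY _ hj) (hQ _ hj) (h _ hj)

end Kernel

theorem eventually_forall_add_mul_le_of_isBigO {Q : ℕ → ℝ} {c r : ℝ} (hrc : r < c)
    (hQ : (fun k : ℕ => Q k - c * k) =O[atTop] fun _ : ℕ => (1 : ℝ)) :
    ∀ᶠ a : ℕ in atTop, ∀ j, Q j + a * r ≤ Q (j + a) := by
  obtain ⟨C, hC⟩ := isBigO_one_nat_atTop_iff.1 hQ
  have hlin : Tendsto (fun a : ℕ => (a : ℝ) * (c - r)) atTop atTop :=
    tendsto_natCast_atTop_atTop.atTop_mul_const (sub_pos.2 hrc)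
  filter_upwards [hlin.eventually_ge_atTop (2 * C)] with a ha j
  have hj := (abs_le.1 (hC j)).2
  have hja := (abs_le.1 (hC (j + a))).1
  push_cast at hja
  linarith

theorem monotone_const_mul_log_succ {α : ℝ} (hα : 0 ≤ α) :
    Monotone fun k : ℕ => α * Real.log (k + 1 : ℕ) := fun m n hmn => by
  beta_reduce
  gcongr

theorem tendsto_const_mul_log_succ_sub (α : ℝ) :
    Tendsto (fun k : ℕ => α * Real.log (k + 1 + 1 : ℕ) - α * Real.log (k + 1 : ℕ)) atTop (𝓝 0) := by
  have h := (Real.tendsto_log_nat_add_one_sub_log.comp (tendsto_add_atTop_nat 1)).const_mul α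
  rw [mul_zero] at h
  refine h.congr fun k => ?_
  rw [Function.comp_apply, mul_sub, Nat.cast_succ (k + 1)]

theorem stmt_3_general (θ : ℝ) (hθ : 0 < θ) (hθπ : θ < Real.pi) (α c : ℝ) (hα : 0 ≤ α)
    (hc : θ / Real.pi < c) (Q : ℕ → ℝ)
    (hQ : (fun k : ℕ => Q k - c * k) =O[atTop] fun _ : ℕ => (1 : ℝ))
    (hQ' : ∀ k : ℕ, 1 ≤ k → ((k : ℝ) - 1 / 2) * θ / Real.pi < Q k)
    (P : ℕ → ℝ) (hPpos : ∀ k, 1 ≤ k → 0 < P k)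
    (hfix : ∀ j, 1 ≤ j → phi θ P P j = ENNReal.ofReal (Q j))
    (hPasymp : (fun k : ℕ => Real.log (P k) - α * Real.log k) =o[atTop] fun _ : ℕ => (1 : ℝ))
    (X : ℕ → ℕ → ℝ) (hXpos : ∀ n, ∀ k, 1 ≤ k → 0 < X n k)
    (hX0 : (fun k : ℕ => Real.log (X 0 k) - α * Real.log k) =o[atTop] fun _ : ℕ => (1 : ℝ))
    (hiter : ∀ n : ℕ, ∀ j, 1 ≤ j → phi θ (X n) (X (n + 1)) j = ENNReal.ofReal (Q j)) :
    ∀ δ : ℝ, 0 < δ → ∃ N : ℕ, ∀ n, N ≤ n →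
      ∀ k, 1 ≤ k → |Real.log (X n k) - Real.log (P k)| ≤ δ := by
  have hQ_nonneg (k : ℕ) (hk : 1 ≤ k) : 0 ≤ Q k := by
    have hk_half : (0 : ℝ) ≤ k - 1 / 2 := by linarith [Nat.one_le_cast (α := ℝ).2 hk]
    exact le_trans (by positivity) (hQ' k hk).le
  have hunif : TendstoUniformly (fun n k => Real.log (X n (k + 1)))
      (fun k => Real.log (P (k + 1))) atTop := by
    refine (isStep_log_of_phi_eq hθ hθπ hPpos hPpos hQ_nonneg hfix).tendstoUniformly
      (logTheta_strictAnti hθ hθπ) continuous_logTheta logTheta_pos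
      (fun u => (logTheta_lt hθ hθπ u).le) (tendsto_logTheta_atTop hθ hθπ) (fun j => ?_) ?_
      (fun n => isStep_log_of_phi_eq hθ hθπ (hXpos n) (hXpos (n + 1)) hQ_nonneg (hiter n))
      (monotone_const_mul_log_succ hα) (tendsto_const_mul_log_succ_sub α)
      (((isLittleO_one_iff ℝ).1 hPasymp).comp (tendsto_add_atTop_nat 1))
      (((isLittleO_one_iff ℝ).1 hX0).comp (tendsto_add_atTop_nat 1))
    · have hj := (div_lt_iff₀' Real.pi_pos).1 (hQ' (j + 1) (Nat.le_add_left 1 j))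
      push_cast at hj
      rw [logTheta_zero hθ hθπ]
      linarith
    · filter_upwards [eventually_forall_add_mul_le_of_isBigO hc hQ] with a ha j
      have h := mul_le_mul_of_nonneg_left (ha (j + 1)) Real.pi_pos.le
      rwa [add_right_comm, mul_add, mul_left_comm, mul_div_cancel₀ _ Real.pi_ne_zero] at h
  intro δ hδ
  obtain ⟨N, hN⟩ := eventually_atTop.1 (Metric.tendstoUniformly_iff.1 hunif δ hδ)
  refine ⟨N, fun n hn k hk => ?_⟩
  obtain ⟨i, rfl⟩ := Nat.exists_eq_add_of_le' hk
  rw [← Real.dist_eq, dist_comm]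
  exact (hN n hn i).le

theorem stmt_3 (θ : ℝ) (hθ : 0 < θ) (hθπ : θ < Real.pi)
    (Q : ℕ → ℝ) (hQpos : ∀ k, 1 ≤ k → 0 < Q k)
    (hQ : (fun k : ℕ => Q k - (k : ℝ)) =O[atTop] fun _ : ℕ => (1 : ℝ))
    (hQ' : ∀ k : ℕ, 1 ≤ k → ((k : ℝ) - 1 / 2) * θ / Real.pi < Q k)
    (P : ℕ → ℝ) (hPpos : ∀ k, 1 ≤ k → 0 < P k)
    (hfix : ∀ j, 1 ≤ j → phi θ P P j = ENNReal.ofReal (Q j))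
    (hPasymp : (fun k : ℕ => Real.log (P k) - (1 + θ / Real.pi) * Real.log k)
      =o[atTop] fun _ : ℕ => (1 : ℝ))
    (X : ℕ → ℕ → ℝ) (hXpos : ∀ n, ∀ k, 1 ≤ k → 0 < X n k)
    (hX0 : (fun k : ℕ => Real.log (X 0 k) - (1 + θ / Real.pi) * Real.log k)
      =o[atTop] fun _ : ℕ => (1 : ℝ))
    (hiter : ∀ n : ℕ, ∀ j, 1 ≤ j → phi θ (X n) (X (n + 1)) j = ENNReal.ofReal (Q j)) :
    ∀ δ : ℝ, 0 < δ → ∃ N : ℕ, ∀ n, N ≤ n →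
      ∀ k, 1 ≤ k → |Real.log (X n k) - Real.log (P k)| ≤ δ := by
  exact stmt_3_general θ hθ hθπ (1 + θ / Real.pi) 1 (by positivity)
    ((div_lt_one Real.pi_pos).2 hθπ) Q (by simpa only [one_mul] using hQ) hQ' P hPpos hfix hPasymp
    X hXpos hX0 hiter
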